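/- For distinct X, Y ∈ G_∞(H) the following conditions are equivalent: (1) X and Y are adjacent; (2) there are infinitely many Z ∈ G_∞(H) ortho-adjacent to both X and Y with the property that there are infinitely many Z' ∈ G_∞(H) ortho-adjacent to each of X, Y and Z. -/

import Mathlib

open Module Submodule Classical

variable {H : Type*} [NormedAddCommGroup H] [InnerProductSpace ℂ H] [CompleteSpace H]

/-- The orthogonal projection of `H` onto a closed subspace `K`, as a map `H →L[ℂ] H`
(defined to be `0` if `K` is not closed). -/
noncomputable def projCLM (K : Submodule ℂ H) : H →L[ℂ] H :=
  if h : IsClosed (K : Set H) then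
    haveI : CompleteSpace K := h.completeSpace_coe
    K.subtypeL.comp (orthogonalProjection K)
  else 0

/-- Two (closed) subspaces are compatible if their orthogonal projections commute. -/
def Compatible (K L : Submodule ℂ H) : Prop := Commute (projCLM K) (projCLM L)

/-- `W` is a subspace of `X` of finite codimension `n` in `X`. -/
def CodimIn (W X : Submodule ℂ H) (n : ℕ) : Prop :=
  W ≤ X ∧ FiniteDimensional ℂ (↥X ⧸ W.comap X.subtype) ∧
    finrank ℂ (↥X ⧸ W.comap X.subtype) = n

/-- `X` and `Y` are adjacent: `X ∩ Y` is a hyperplane in both `X` and `Y`. -/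
def Adjacent (X Y : Submodule ℂ H) : Prop :=
  CodimIn (X ⊓ Y) X 1 ∧ CodimIn (X ⊓ Y) Y 1

/-- `X` and `Y` are ortho-adjacent: adjacent and compatible. -/
def OrthoAdjacent (X Y : Submodule ℂ H) : Prop := Adjacent X Y ∧ Compatible X Y

/-- The Grassmannian `G_∞(H)` of closed subspaces of `H` whose dimension and
codimension both are infinite. -/
def Ginf : Set (Submodule ℂ H) :=
  {X | IsClosed (X : Set H) ∧ ¬FiniteDimensional ℂ X ∧ ¬FiniteDimensional ℂ Xᗮ}

/-- `X ∩ Y` has the same finite codimension in both `X` and `Y`. -/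
def SameFinCodim (X Y : Submodule ℂ H) : Prop :=
  ∃ n : ℕ, CodimIn (X ⊓ Y) X n ∧ CodimIn (X ⊓ Y) Y n

/-- An `A`-component of `G_∞(H)`: a set of elements pairwise at the same finite
codimension, maximal with respect to this property. -/
def IsAComponent (C : Set (Submodule ℂ H)) : Prop :=
  C ⊆ Ginf ∧ (∀ X ∈ C, ∀ Y ∈ C, SameFinCodim X Y) ∧
    ∀ D : Set (Submodule ℂ H), D ⊆ Ginf → (∀ X ∈ D, ∀ Y ∈ D, SameFinCodim X Y) →
      C ⊆ D → D = C

/-- The star `S(X)`: all closed subspaces of `H` containing `X` as a hyperplane. -/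
def starSet (X : Submodule ℂ H) : Set (Submodule ℂ H) :=
  {Y | IsClosed (Y : Set H) ∧ CodimIn X Y 1}

/-- The top `G¹(X)`: all closed hyperplanes of `X`. -/
def topSet (X : Submodule ℂ H) : Set (Submodule ℂ H) :=
  {M | IsClosed (M : Set H) ∧ CodimIn M X 1}

/-- The image `U(M)` of a subspace `M ⊆ X` under a linear isometry `U : X ≃ X'`,
viewed as a subspace of `H`. -/
def imL (X X' : Submodule ℂ H) (U : ↥X ≃ₗᵢ[ℂ] ↥X') (M : Submodule ℂ H) : Submodule ℂ H :=
  Submodule.map X'.subtype (Submodule.map U.toLinearEquiv.toLinearMap (M.comap X.subtype))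

/-- The image `U(M)` of a subspace `M ⊆ X` under a conjugate-linear isometry `U : X ≃ X'`,
viewed as a subspace of `H`. -/
def imC (X X' : Submodule ℂ H) (U : ↥X ≃ₗᵢ⋆[ℂ] ↥X') (M : Submodule ℂ H) : Submodule ℂ H :=
  Submodule.map X'.subtype (Submodule.map U.toLinearEquiv.toLinearMap (M.comap X.subtype))

/-- The Grassmannian `G_k(H)` of `k`-dimensional subspaces of `H`. -/
def Gk (k : ℕ) : Set (Submodule ℂ H) :=
  {X | FiniteDimensional ℂ X ∧ finrank ℂ X = k}

/-- The Grassmannian `G^k(H)` of closed subspaces of `H` of codimension `k`. -/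
def GCk (k : ℕ) : Set (Submodule ℂ H) :=
  {X | IsClosed (X : Set H) ∧ FiniteDimensional ℂ (H ⧸ X) ∧ finrank ℂ (H ⧸ X) = k}

/-!
If `X` and `Y` are adjacent, put `W = X ⊓ Y`. Adding to `W` a vector orthogonal to `X ⊔ Y` gives
infinitely many subspaces ortho-adjacent to both, and for each such `Z`, adding to `W` a vector
orthogonal to `X ⊔ Y ⊔ Z` gives infinitely many subspaces ortho-adjacent to `X`, `Y` and `Z`.

If distinct `X` and `Y` are not adjacent, then every `Z` adjacent to both is the join of `Z ⊓ X`
and `Z ⊓ Y` and contains `X ⊓ Y`. Two adjacent such `Z` and `Z'` have the same meet with `X` or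
with `Y`. In the first case compatibility forces `Z' = Z ⊓ X ⊔ Zᗮ ⊓ Y`, and symmetrically in the
second, so for given `Z` at most two subspaces `Z'` exist.
-/

section Lattice

variable {α : Type*} [Lattice α] {x y z w : α}

/-- Adjacency in a lattice: the meet is covered by both elements. For subspaces this is
`Adjacent`, see `adjacent_iff_latticeAdjacent`. -/
def LatticeAdjacent (x y : α) : Prop := x ⊓ y ⋖ x ∧ x ⊓ y ⋖ y

theorem LatticeAdjacent.symm (h : LatticeAdjacent x y) : LatticeAdjacent y x := by
  rw [LatticeAdjacent, inf_comm]
  exact ⟨h.2, h.1⟩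

theorem LatticeAdjacent.inf_ne_inf (hzx : LatticeAdjacent z x) (hzy : LatticeAdjacent z y)
    (hne : x ≠ y) (hxy : ¬LatticeAdjacent x y) : z ⊓ x ≠ z ⊓ y := by
  intro heq
  have hinf : x ⊓ y = z ⊓ x := hzx.2.wcovBy.inf_eq (heq ▸ hzy.2.wcovBy) hne
  exact hxy ⟨hinf ▸ hzx.2, hinf ▸ heq ▸ hzy.2⟩

theorem LatticeAdjacent.inf_sup_inf_eq (hzx : LatticeAdjacent z x) (hzy : LatticeAdjacent z y)
    (hne : x ≠ y) (hxy : ¬LatticeAdjacent x y) : z ⊓ x ⊔ z ⊓ y = z :=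
  hzx.1.wcovBy.sup_eq hzy.1.wcovBy (hzx.inf_ne_inf hzy hne hxy)

variable [IsModularLattice α]

theorem latticeAdjacent_iff_covBy_sup :
    LatticeAdjacent x y ↔ x ⋖ x ⊔ y ∧ y ⋖ x ⊔ y :=
  ⟨fun h => ⟨covBy_sup_of_inf_covBy_right h.2, covBy_sup_of_inf_covBy_left h.1⟩,
    fun h => ⟨inf_covBy_of_covBy_sup_right h.2, inf_covBy_of_covBy_sup_left h.1⟩⟩

theorem LatticeAdjacent.sup_ne_sup (hzx : LatticeAdjacent z x) (hzy : LatticeAdjacent z y)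
    (hne : x ≠ y) (hxy : ¬LatticeAdjacent x y) : z ⊔ x ≠ z ⊔ y := by
  rw [latticeAdjacent_iff_covBy_sup] at hzx hzy hxy
  intro heq
  have hsup : x ⊔ y = z ⊔ x := hzx.2.wcovBy.sup_eq (heq ▸ hzy.2.wcovBy) hne
  exact hxy ⟨hsup ▸ hzx.2, hsup ▸ heq ▸ hzy.2⟩

theorem LatticeAdjacent.inf_le (hzx : LatticeAdjacent z x) (hzy : LatticeAdjacent z y)
    (hne : x ≠ y) (hxy : ¬LatticeAdjacent x y) : x ⊓ y ≤ z := by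
  have hsup := hzx.sup_ne_sup hzy hne hxy
  rw [latticeAdjacent_iff_covBy_sup] at hzx hzy
  calc x ⊓ y ≤ (z ⊔ x) ⊓ (z ⊔ y) := inf_le_inf le_sup_right le_sup_right
    _ = z := hzx.1.wcovBy.inf_eq hzy.1.wcovBy hsup

/-- If both meets differed, then `z ⊔ w` would be `x ⊔ y`, which is two steps above `z`. -/
theorem LatticeAdjacent.inf_eq_inf_or_inf_eq_inf
    (hzx : LatticeAdjacent z x) (hzy : LatticeAdjacent z y)
    (hwx : LatticeAdjacent w x) (hwy : LatticeAdjacent w y) (hzw : LatticeAdjacent z w)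
    (hne : x ≠ y) (hxy : ¬LatticeAdjacent x y) : z ⊓ x = w ⊓ x ∨ z ⊓ y = w ⊓ y := by
  by_contra! hinf
  have hx : z ⊓ x ⊔ w ⊓ x = x := hzx.2.wcovBy.sup_eq hwx.2.wcovBy hinf.1
  have hy : z ⊓ y ⊔ w ⊓ y = y := hzy.2.wcovBy.sup_eq hwy.2.wcovBy hinf.2
  have hsup : z ⊔ w = x ⊔ y := by
    rw [← hzx.inf_sup_inf_eq hzy hne hxy, ← hwx.inf_sup_inf_eq hwy hne hxy,
      sup_sup_sup_comm, hx, hy]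
  have hz : z ⋖ x ⊔ y := hsup ▸ (latticeAdjacent_iff_covBy_sup.1 hzw).1
  have hzxy : z ≤ x ⊔ y := hz.le
  refine hzx.sup_ne_sup hzy hne hxy ?_
  rw [latticeAdjacent_iff_covBy_sup] at hzx hzy
  calc z ⊔ x = x ⊔ y :=
        (hz.eq_or_eq le_sup_left (sup_le hzxy le_sup_left)).resolve_left hzx.1.ne'
    _ = z ⊔ y :=
        ((hz.eq_or_eq le_sup_left (sup_le hzxy le_sup_right)).resolve_left hzy.1.ne').symm

end Lattice

section VectorSpace

variable {K V : Type*} [DivisionRing K] [AddCommGroup V] [Module K V] {W X N : Submodule K V}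

theorem exists_eq_sup_span_singleton_of_covBy (h : W ⋖ X) : ∃ v, X = W ⊔ K ∙ v := by
  obtain ⟨v, hvX, hvW⟩ := SetLike.exists_of_lt h.lt
  have hcov : W ⋖ W ⊔ K ∙ v := sup_comm (K ∙ v) W ▸ covBy_span_singleton_sup hvW
  exact ⟨v, ((h.eq_or_eq hcov.le (sup_le h.le (by simpa using hvX))).resolve_left hcov.ne').symm⟩

theorem finiteDimensional_of_covBy [FiniteDimensional K W] (h : W ⋖ X) :
    FiniteDimensional K X := by
  obtain ⟨v, rfl⟩ := exists_eq_sup_span_singleton_of_covBy h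
  infer_instance

theorem infinite_setOf_sup_span_singleton (hN : ¬FiniteDimensional K N) (hWN : Disjoint W N) :
    {Z | ∃ v ∈ N, v ≠ 0 ∧ Z = W ⊔ K ∙ v}.Infinite := by
  intro hfin
  have hline : ∀ v ∈ N, (W ⊔ K ∙ v) ⊓ N = K ∙ v := fun v hv => by
    rw [sup_comm, sup_inf_assoc_of_le _ (by simpa using hv), hWN.eq_bot, sup_bot_eq]
  have hle : N ≤ hfin.toFinset.sup (· ⊓ N) := fun v hv => by
    rcases eq_or_ne v 0 with rfl | hv0
    · exact zero_mem _
    · have hmem : W ⊔ K ∙ v ∈ hfin.toFinset := hfin.mem_toFinset.2 ⟨v, hv, hv0, rfl⟩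
      refine Finset.le_sup (f := (· ⊓ N)) hmem ?_
      simpa only [hline v hv] using mem_span_singleton_self v
  have hfg : ∀ Z ∈ hfin.toFinset, (Z ⊓ N).FG := by
    simp only [hfin.mem_toFinset]
    rintro _ ⟨v, hv, -, rfl⟩
    rw [hline v hv]
    exact fg_span_singleton v
  have := Module.Finite.iff_fg.2 (fg_finset_sup _ _ hfg)
  exact hN (finiteDimensional_of_le hle)

end VectorSpace

section InnerProductSpace

variable {𝕜 E : Type*} [RCLike 𝕜] [NormedAddCommGroup E] [InnerProductSpace 𝕜 E]
  {K L W X : Submodule 𝕜 E}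

theorem isAtom_orthogonal_inf_of_covBy [W.HasOrthogonalProjection] (h : W ⋖ X) :
    IsAtom (Wᗮ ⊓ X) := by
  have hinf : W ⊓ (Wᗮ ⊓ X) = ⊥ := (W.orthogonal_disjoint.mono_right inf_le_left).eq_bot
  have hsup : W ⊔ Wᗮ ⊓ X = X := sup_orthogonal_inf_of_hasOrthogonalProjection h.le
  exact bot_covBy_iff.1 (hinf ▸ inf_covBy_of_covBy_sup_left (hsup.symm ▸ h))

theorem finiteDimensional_orthogonal_of_covBy [FiniteDimensional 𝕜 Xᗮ] (h : W ⋖ X) :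
    FiniteDimensional 𝕜 Wᗮ := by
  obtain ⟨v, rfl⟩ := exists_eq_sup_span_singleton_of_covBy h
  refine Module.Finite.iff_fg.2
    (fg_of_fg_map_of_fg_inf_ker (innerₛₗ 𝕜 v) (IsNoetherian.noetherian _) ?_)
  have hker : LinearMap.ker (innerₛₗ 𝕜 v) = (𝕜 ∙ v)ᗮ := by
    ext u
    simp [mem_orthogonal_singleton_iff_inner_right]
  rw [hker, inf_orthogonal]
  exact Module.Finite.iff_fg.1 inferInstance

variable [K.HasOrthogonalProjection] [L.HasOrthogonalProjection]
  [(K ⊓ L).HasOrthogonalProjection]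

theorem starProjection_mul_starProjection_eq_inf_of_commute
    (h : Commute K.starProjection L.starProjection) :
    K.starProjection * L.starProjection = (K ⊓ L).starProjection := by
  ext v
  have hmem : K.starProjection (L.starProjection v) ∈ K ⊓ L :=
    ⟨K.starProjection_apply_mem _, DFunLike.congr_fun h v ▸ L.starProjection_apply_mem _⟩
  refine (eq_starProjection_of_mem_orthogonal hmem ?_).symm
  rw [← sub_add_sub_cancel v (L.starProjection v)]
  exact add_mem (orthogonal_le inf_le_right (L.sub_starProjection_mem_orthogonal v))
    (orthogonal_le inf_le_left (K.sub_starProjection_mem_orthogonal _))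

theorem starProjection_mul_starProjection_eq_inf_of_orthogonal_inf_le
    (h : (K ⊓ L)ᗮ ⊓ L ≤ Kᗮ) :
    K.starProjection * L.starProjection = (K ⊓ L).starProjection := by
  ext v
  have hmem : (K ⊓ L).starProjection v ∈ K ⊓ L := (K ⊓ L).starProjection_apply_mem v
  have hperp : L.starProjection v - (K ⊓ L).starProjection v ∈ (K ⊓ L)ᗮ := by
    rw [← sub_sub_sub_cancel_left _ _ v]
    exact sub_mem ((K ⊓ L).sub_starProjection_mem_orthogonal v)
      (orthogonal_le inf_le_right (L.sub_starProjection_mem_orthogonal v))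
  exact eq_starProjection_of_mem_orthogonal hmem.1
    (h ⟨hperp, sub_mem (L.starProjection_apply_mem v) hmem.2⟩)

theorem commute_starProjection_iff_orthogonal_inf_le [CompleteSpace E] :
    Commute K.starProjection L.starProjection ↔ (K ⊓ L)ᗮ ⊓ L ≤ Kᗮ := by
  constructor
  · rintro h v ⟨hvKL, hvL⟩
    refine K.starProjection_apply_eq_zero_iff.1 ?_
    calc K.starProjection v = (K.starProjection * L.starProjection) v := by
          rw [mul_apply_eq_comp, starProjection_eq_self_iff.2 hvL]
      _ = (K ⊓ L).starProjection v := by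
          rw [starProjection_mul_starProjection_eq_inf_of_commute h]
      _ = 0 := (K ⊓ L).starProjection_apply_eq_zero_iff.2 hvKL
  · intro h
    rw [isStarProjection_starProjection.isSelfAdjoint.commute_iff
      isStarProjection_starProjection.isSelfAdjoint,
      starProjection_mul_starProjection_eq_inf_of_orthogonal_inf_le h]
    exact isStarProjection_starProjection.isSelfAdjoint

end InnerProductSpace

section OrthogonalExtension

variable {𝕜 E : Type*} [RCLike 𝕜] [NormedAddCommGroup E] [InnerProductSpace 𝕜 E]
  {S W X Z : Submodule 𝕜 E}

/-- The subspaces spanned by `W` and one further nonzero vector orthogonal to `S`. For `W ≤ S`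
they supply the many common ortho-adjacent neighbours of subspaces between `W` and `S`. -/
def orthogonalExtensions (W S : Submodule 𝕜 E) : Set (Submodule 𝕜 E) :=
  {Z | ∃ z ∈ Sᗮ, z ≠ 0 ∧ Z = W ⊔ 𝕜 ∙ z}

theorem infinite_orthogonalExtensions (hWS : W ≤ S) (hS : ¬FiniteDimensional 𝕜 Sᗮ) :
    (orthogonalExtensions W S).Infinite :=
  infinite_setOf_sup_span_singleton hS (S.orthogonal_disjoint.mono_left hWS)

theorem orthogonalExtensions_anti (hXS : X ≤ S) :
    orthogonalExtensions W S ⊆ orthogonalExtensions W X := by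
  rintro _ ⟨z, hz, hz0, rfl⟩
  exact ⟨z, orthogonal_le hXS hz, hz0, rfl⟩

theorem isClosed_of_mem_orthogonalExtensions (hW : IsClosed (W : Set E))
    (hZ : Z ∈ orthogonalExtensions W S) : IsClosed (Z : Set E) := by
  obtain ⟨z, -, -, rfl⟩ := hZ
  exact isClosed_sup_finiteDimensional _ _ hW

theorem inf_eq_of_mem_orthogonalExtensions (hWS : W ≤ S) (hZ : Z ∈ orthogonalExtensions W S) :
    Z ⊓ S = W := by
  obtain ⟨z, hz, -, rfl⟩ := hZ
  have hdisj : Disjoint (𝕜 ∙ z) S :=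
    S.orthogonal_disjoint.symm.mono_left (by simpa using hz)
  rw [sup_inf_assoc_of_le _ hWS, hdisj.eq_bot, sup_bot_eq]

theorem covBy_of_mem_orthogonalExtensions (hWS : W ≤ S) (hZ : Z ∈ orthogonalExtensions W S) :
    W ⋖ Z := by
  obtain ⟨z, hz, hz0, rfl⟩ := hZ
  rw [sup_comm]
  exact covBy_span_singleton_sup fun hzW => hz0 (S.orthogonal_disjoint.le_bot ⟨hWS hzW, hz⟩)

theorem not_finiteDimensional_orthogonal_sup (hWS : W ≤ S) (hS : ¬FiniteDimensional 𝕜 Sᗮ)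
    (hZ : Z ∈ orthogonalExtensions W S) : ¬FiniteDimensional 𝕜 (S ⊔ Z)ᗮ := by
  have hinf : S ⊓ Z = W := inf_comm S Z ▸ inf_eq_of_mem_orthogonalExtensions hWS hZ
  have hcov : S ⋖ S ⊔ Z :=
    covBy_sup_of_inf_covBy_right (hinf ▸ covBy_of_mem_orthogonalExtensions hWS hZ)
  exact fun _ => hS (finiteDimensional_orthogonal_of_covBy hcov)

end OrthogonalExtension

section Adjacent

variable {E : Type*} [NormedAddCommGroup E] [InnerProductSpace ℂ E] {X Y Z W : Submodule ℂ E}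

theorem codimIn_one_iff_covBy : CodimIn W X 1 ↔ W ⋖ X := by
  constructor
  · rintro ⟨hle, -, hrank⟩
    rwa [covBy_iff_quot_is_simple hle, isSimpleModule_iff_finrank_eq_one]
  · intro h
    have hrank := h
    rw [covBy_iff_quot_is_simple h.le, isSimpleModule_iff_finrank_eq_one] at hrank
    exact ⟨h.le, FiniteDimensional.of_finrank_pos (hrank ▸ one_pos), hrank⟩

theorem adjacent_iff_latticeAdjacent : Adjacent X Y ↔ LatticeAdjacent X Y := by
  rw [Adjacent, LatticeAdjacent, codimIn_one_iff_covBy, codimIn_one_iff_covBy]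

theorem Adjacent.symm (h : Adjacent X Y) : Adjacent Y X :=
  adjacent_iff_latticeAdjacent.2 (adjacent_iff_latticeAdjacent.1 h).symm

theorem Adjacent.mem_Ginf (h : Adjacent Z X) (hX : X ∈ Ginf) (hZ : IsClosed (Z : Set E)) :
    Z ∈ Ginf := by
  rw [adjacent_iff_latticeAdjacent] at h
  refine ⟨hZ, fun _ => hX.2.1 ?_, fun _ => hX.2.2 ?_⟩
  · have : FiniteDimensional ℂ ↥(Z ⊓ X) := finiteDimensional_of_le inf_le_left
    exact finiteDimensional_of_covBy h.2
  · have : FiniteDimensional ℂ (Z ⊔ X)ᗮ := finiteDimensional_of_le (orthogonal_le le_sup_left)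
    exact finiteDimensional_orthogonal_of_covBy (latticeAdjacent_iff_covBy_sup.1 h).2

end Adjacent

section Compatible

variable {K L M : Submodule ℂ H}

theorem projCLM_eq_starProjection [K.HasOrthogonalProjection] :
    projCLM K = K.starProjection := by
  have hK : IsClosed (K : Set H) := K.orthogonal_orthogonal ▸ Kᗮ.isClosed_orthogonal
  rw [projCLM, dif_pos hK]
  rfl

theorem compatible_iff_orthogonal_inf_le (hK : IsClosed (K : Set H)) (hL : IsClosed (L : Set H)) :
    Compatible K L ↔ (K ⊓ L)ᗮ ⊓ L ≤ Kᗮ := by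
  have := hK.completeSpace_coe
  have := hL.completeSpace_coe
  have : CompleteSpace ↥(K ⊓ L) := (hK.inter hL).completeSpace_coe
  rw [Compatible, projCLM_eq_starProjection, projCLM_eq_starProjection,
    commute_starProjection_iff_orthogonal_inf_le]

theorem Compatible.symm (h : Compatible K L) : Compatible L K :=
  Commute.symm h

theorem Compatible.inf_left (hK : IsClosed (K : Set H)) (hL : IsClosed (L : Set H))
    (hKL : Compatible K L) (hKM : Compatible K M) (hLM : Compatible L M) :
    Compatible (K ⊓ L) M := by
  have := hK.completeSpace_coe
  have := hL.completeSpace_coe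
  have : CompleteSpace ↥(K ⊓ L) := (hK.inter hL).completeSpace_coe
  have hproj : projCLM (K ⊓ L) = projCLM K * projCLM L := by
    rw [Compatible] at hKL
    simp only [projCLM_eq_starProjection] at hKL ⊢
    exact (starProjection_mul_starProjection_eq_inf_of_commute hKL).symm
  rw [Compatible, hproj]
  exact hKM.mul_left hLM

end Compatible

section OrthoAdjacent

variable {W X Y Z Z' : Submodule ℂ H}

theorem OrthoAdjacent.symm (h : OrthoAdjacent X Y) : OrthoAdjacent Y X :=
  ⟨h.1.symm, h.2.symm⟩

theorem orthoAdjacent_of_mem_orthogonalExtensions (hW : IsClosed (W : Set H))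
    (hX : IsClosed (X : Set H)) (hWX : W ⋖ X) (hZ : Z ∈ orthogonalExtensions W X) :
    OrthoAdjacent Z X := by
  have hinf : Z ⊓ X = W := inf_eq_of_mem_orthogonalExtensions hWX.le hZ
  have hWZ : W ⋖ Z := covBy_of_mem_orthogonalExtensions hWX.le hZ
  have hZclosed : IsClosed (Z : Set H) := isClosed_of_mem_orthogonalExtensions hW hZ
  refine ⟨adjacent_iff_latticeAdjacent.2 ⟨hinf.symm ▸ hWZ, hinf.symm ▸ hWX⟩, Compatible.symm ?_⟩
  rw [compatible_iff_orthogonal_inf_le hX hZclosed, inf_comm X Z, hinf]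
  obtain ⟨z, hz, -, rfl⟩ := hZ
  have hzX : ℂ ∙ z ≤ Xᗮ := by simpa using hz
  rw [inf_comm, sup_comm, sup_inf_assoc_of_le _ (hzX.trans (orthogonal_le hWX.le)),
    W.inf_orthogonal_eq_bot, sup_bot_eq]
  exact hzX

theorem infinite_setOf_orthoAdjacent_of_adjacent (hX : X ∈ Ginf) (hY : IsClosed (Y : Set H))
    (h : Adjacent X Y) :
    {Z : Submodule ℂ H | Z ∈ Ginf ∧ OrthoAdjacent Z X ∧ OrthoAdjacent Z Y ∧
      {Z' : Submodule ℂ H | Z' ∈ Ginf ∧ OrthoAdjacent Z' X ∧ OrthoAdjacent Z' Y ∧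
        OrthoAdjacent Z' Z}.Infinite}.Infinite := by
  rw [adjacent_iff_latticeAdjacent] at h
  have hW : IsClosed ((X ⊓ Y : Submodule ℂ H) : Set H) := hX.1.inter hY
  have hWS : X ⊓ Y ≤ X ⊔ Y := inf_le_left.trans le_sup_left
  have hS : ¬FiniteDimensional ℂ (X ⊔ Y)ᗮ := fun _ =>
    hX.2.2 (finiteDimensional_orthogonal_of_covBy (latticeAdjacent_iff_covBy_sup.1 h).1)
  have hneighbour : ∀ Z ∈ orthogonalExtensions (X ⊓ Y) (X ⊔ Y),
      Z ∈ Ginf ∧ OrthoAdjacent Z X ∧ OrthoAdjacent Z Y := fun Z hZ => by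
    have hZX : OrthoAdjacent Z X := orthoAdjacent_of_mem_orthogonalExtensions hW hX.1 h.1
      (orthogonalExtensions_anti le_sup_left hZ)
    have hZY : OrthoAdjacent Z Y := orthoAdjacent_of_mem_orthogonalExtensions hW hY h.2
      (orthogonalExtensions_anti le_sup_right hZ)
    exact ⟨hZX.1.mem_Ginf hX (isClosed_of_mem_orthogonalExtensions hW hZ), hZX, hZY⟩
  refine (infinite_orthogonalExtensions hWS hS).mono fun Z hZ => ?_
  obtain ⟨hZG, hZX, hZY⟩ := hneighbour Z hZ
  refine ⟨hZG, hZX, hZY, ?_⟩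
  refine (infinite_orthogonalExtensions (hWS.trans le_sup_left)
    (not_finiteDimensional_orthogonal_sup hWS hS hZ)).mono fun Z' hZ' => ?_
  obtain ⟨hZG', hZX', hZY'⟩ := hneighbour Z' (orthogonalExtensions_anti le_sup_left hZ')
  exact ⟨hZG', hZX', hZY', orthoAdjacent_of_mem_orthogonalExtensions hW hZG.1
    (covBy_of_mem_orthogonalExtensions hWS hZ) (orthogonalExtensions_anti le_sup_right hZ')⟩

/-- Since `Z ⊓ Z' = Z ⊓ X` is compatible with `Y`, the part of `Z' ⊓ Y` orthogonal to `X ⊓ Y` is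
orthogonal to `Z ⊓ Z'`, and hence, by compatibility of `Z` and `Z'`, to `Z`. -/
theorem orthogonal_inf_le_orthogonal_of_inf_eq (hY : IsClosed (Y : Set H))
    (hZ : IsClosed (Z : Set H)) (hZ' : IsClosed (Z' : Set H)) (hZY : Compatible Z Y)
    (hZY' : Compatible Z' Y) (hZZ' : Compatible Z Z') (hinf : Z ⊓ Z' = Z ⊓ X)
    (hle : X ⊓ Y ≤ Z) : (X ⊓ Y)ᗮ ⊓ (Z' ⊓ Y) ≤ Zᗮ := by
  have hmeet : (Z ⊓ Z') ⊓ Y = X ⊓ Y := by rw [hinf, inf_assoc, inf_eq_right.2 hle]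
  have hperp : (X ⊓ Y)ᗮ ⊓ Y ≤ (Z ⊓ Z')ᗮ := hmeet ▸
    (compatible_iff_orthogonal_inf_le (hZ.inter hZ') hY).1 (hZZ'.inf_left hZ hZ' hZY hZY')
  calc (X ⊓ Y)ᗮ ⊓ (Z' ⊓ Y) = ((X ⊓ Y)ᗮ ⊓ Y) ⊓ Z' := by rw [inf_comm Z', inf_assoc]
    _ ≤ (Z ⊓ Z')ᗮ ⊓ Z' := inf_le_inf_right _ hperp
    _ ≤ Zᗮ := (compatible_iff_orthogonal_inf_le hZ hZ').1 hZZ'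

theorem covBy_sup_orthogonal_inf (hY : IsClosed (Y : Set H)) (hZ : IsClosed (Z : Set H))
    (hZY : OrthoAdjacent Z Y) (hWZ : W ≤ Z) : W ⋖ W ⊔ Zᗮ ⊓ Y := by
  have : CompleteSpace ↥(Z ⊓ Y) := (hZ.inter hY).completeSpace_coe
  have hcompl : (Z ⊓ Y)ᗮ ⊓ Y = Zᗮ ⊓ Y := le_antisymm
    (le_inf ((compatible_iff_orthogonal_inf_le hZ hY).1 hZY.2) inf_le_right)
    (inf_le_inf_right _ (orthogonal_le inf_le_left))
  have hatom : IsAtom (Zᗮ ⊓ Y) :=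
    hcompl ▸ isAtom_orthogonal_inf_of_covBy (adjacent_iff_latticeAdjacent.1 hZY.1).2
  have hdisj : W ⊓ (Zᗮ ⊓ Y) = ⊥ := (Z.orthogonal_disjoint.mono hWZ inf_le_left).eq_bot
  exact covBy_sup_of_inf_covBy_right (hdisj.symm ▸ hatom.bot_covBy)

theorem eq_inf_sup_orthogonal_inf_of_inf_eq (hY : IsClosed (Y : Set H))
    (hZ : IsClosed (Z : Set H)) (hZ' : IsClosed (Z' : Set H)) (hne : X ≠ Y)
    (hXY : ¬Adjacent X Y) (hZX : Adjacent Z X) (hZY : OrthoAdjacent Z Y) (hZX' : Adjacent Z' X)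
    (hZY' : OrthoAdjacent Z' Y) (hZZ' : OrthoAdjacent Z Z') (heq : Z ⊓ X = Z' ⊓ X) :
    Z' = Z ⊓ X ⊔ Zᗮ ⊓ Y := by
  have hcov := covBy_sup_orthogonal_inf hY hZ hZY (inf_le_left : Z ⊓ X ≤ Z)
  obtain ⟨hZY, hZYc⟩ := hZY
  obtain ⟨hZY', hZYc'⟩ := hZY'
  obtain ⟨hZZ', hZZc'⟩ := hZZ'
  rw [adjacent_iff_latticeAdjacent] at hXY hZX hZY hZX' hZY' hZZ'
  have hinf : Z ⊓ Z' = Z ⊓ X :=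
    (hZX.1.eq_or_eq (le_inf inf_le_left (heq ▸ inf_le_left)) inf_le_left).resolve_right hZZ'.1.ne
  have hWZ : X ⊓ Y ≤ Z := hZX.inf_le hZY hne hXY
  have hWZ' : X ⊓ Y ≤ Z' ⊓ Y := le_inf (hZX'.inf_le hZY' hne hXY) inf_le_right
  have : CompleteSpace ↥(X ⊓ Y) := by
    have hmeet : X ⊓ Y = Z ⊓ Z' ⊓ Y := by rw [hinf, inf_assoc, inf_eq_right.2 hWZ]
    exact hmeet ▸ ((hZ.inter hZ').inter hY).completeSpace_coe
  have hZYle : Z' ⊓ Y ≤ Z ⊓ X ⊔ Zᗮ ⊓ Y :=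
    calc Z' ⊓ Y = X ⊓ Y ⊔ (X ⊓ Y)ᗮ ⊓ (Z' ⊓ Y) :=
          (sup_orthogonal_inf_of_hasOrthogonalProjection hWZ').symm
      _ ≤ Z ⊓ X ⊔ Zᗮ ⊓ Y := sup_le_sup (le_inf hWZ inf_le_left) (le_inf
          (orthogonal_inf_le_orthogonal_of_inf_eq hY hZ hZ' hZYc hZYc' hZZc' hinf hWZ)
          (inf_le_right.trans inf_le_right))
  have hle : Z' ≤ Z ⊓ X ⊔ Zᗮ ⊓ Y :=
    calc Z' = Z' ⊓ X ⊔ Z' ⊓ Y := (hZX'.inf_sup_inf_eq hZY' hne hXY).symm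
      _ ≤ Z ⊓ X ⊔ Zᗮ ⊓ Y := sup_le (heq ▸ le_sup_left) hZYle
  exact (hcov.eq_or_eq (heq ▸ inf_le_left) hle).resolve_left (heq ▸ hZX'.1.ne')

theorem finite_setOf_orthoAdjacent_of_not_adjacent (hX : IsClosed (X : Set H))
    (hY : IsClosed (Y : Set H)) (hZ : IsClosed (Z : Set H)) (hne : X ≠ Y) (hXY : ¬Adjacent X Y)
    (hZX : OrthoAdjacent Z X) (hZY : OrthoAdjacent Z Y) :
    {Z' : Submodule ℂ H | IsClosed (Z' : Set H) ∧ OrthoAdjacent Z' X ∧ OrthoAdjacent Z' Y ∧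
      OrthoAdjacent Z' Z}.Finite := by
  refine (Set.toFinite {Z ⊓ X ⊔ Zᗮ ⊓ Y, Z ⊓ Y ⊔ Zᗮ ⊓ X}).subset ?_
  rintro Z' ⟨hZ', hZX', hZY', hZZ'⟩
  replace hZZ' := hZZ'.symm
  have hYX : ¬Adjacent Y X := fun h => hXY h.symm
  have hdich : Z ⊓ X = Z' ⊓ X ∨ Z ⊓ Y = Z' ⊓ Y := by
    simp only [OrthoAdjacent, adjacent_iff_latticeAdjacent] at hXY hZX hZY hZX' hZY' hZZ'
    exact hZX.1.inf_eq_inf_or_inf_eq_inf hZY.1 hZX'.1 hZY'.1 hZZ'.1 hne hXY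
  rcases hdich with heq | heq
  · exact .inl (eq_inf_sup_orthogonal_inf_of_inf_eq hY hZ hZ' hne hXY hZX.1 hZY hZX'.1 hZY'
      hZZ' heq)
  · exact .inr (eq_inf_sup_orthogonal_inf_of_inf_eq hX hZ hZ' hne.symm hYX hZY.1 hZX hZY'.1 hZX'
      hZZ' heq)

end OrthoAdjacent

/-- for distinct `X, Y ∈ G_∞(H)`, they are adjacent iff there are infinitely many
`Z ∈ G_∞(H)` ortho-adjacent to both `X, Y` such that there are infinitely many `Z' ∈ G_∞(H)`
ortho-adjacent to each of `X, Y, Z`. -/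
theorem stmt6 (hH : ¬FiniteDimensional ℂ H) (X Y : Submodule ℂ H)
    (hX : X ∈ Ginf (H := H)) (hY : Y ∈ Ginf (H := H)) (hne : X ≠ Y) :
    Adjacent X Y ↔
      {Z : Submodule ℂ H | Z ∈ Ginf (H := H) ∧ OrthoAdjacent Z X ∧ OrthoAdjacent Z Y ∧
        {Z' : Submodule ℂ H | Z' ∈ Ginf (H := H) ∧ OrthoAdjacent Z' X ∧ OrthoAdjacent Z' Y ∧
          OrthoAdjacent Z' Z}.Infinite}.Infinite := by
  refine ⟨infinite_setOf_orthoAdjacent_of_adjacent hX hY.1, fun hinf => ?_⟩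
  by_contra hXY
  obtain ⟨Z, hZ, hZX, hZY, hinf'⟩ := hinf.nonempty
  have hfin := finite_setOf_orthoAdjacent_of_not_adjacent hX.1 hY.1 hZ.1 hne hXY hZX hZY
  exact hinf' (hfin.subset fun Z' hZ' => ⟨hZ'.1.1, hZ'.2⟩)
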